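/- Let R ∈ ℂ(z)^{m×m} be a nonzero para-Hermitian rational matrix. Then there do not exist a natural number p and constant matrices A ∈ ℂ^{p×p}, B, C ∈ ℂ^{p×m}, D ∈ ℂ^{m×m} with det(z·A + A^H) ≠ 0 in ℂ(z) such that R = (z·D + D^H) + (z·B^H + C^H)·(z·A + A^H)⁻¹·(z·C + B); that is, R is not the transfer function of any *-palindromic linear system matrix. -/

import Mathlib

open Polynomial Matrix

set_option synthInstance.maxHeartbeats 1000000
set_option maxHeartbeats 1000000

noncomputable section

/-- Coefficientwise complex conjugation on rational functions. -/
def conjRF : RatFunc ℂ →+* RatFunc ℂ :=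
  RatFunc.mapRingHom (Polynomial.mapRingHom (starRingEnd ℂ))
    (by
      intro x hx
      simp only [Submonoid.mem_comap, mem_nonZeroDivisors_iff_ne_zero] at *
      intro h
      exact hx (Polynomial.map_injective _ (starRingEnd ℂ).injective (by simpa using h)))

/-- Substitution of `g` for the variable in `f`. -/
def subst (g f : RatFunc ℂ) : RatFunc ℂ := RatFunc.eval (algebraMap ℂ (RatFunc ℂ)) g f

/-- Constant complex matrices regarded as matrices over `ℂ(z)`. -/
def toRF {n o : Type*} (A : Matrix n o ℂ) : Matrix n o (RatFunc ℂ) :=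
  A.map (algebraMap ℂ (RatFunc ℂ))

/-- The para-conjugate `R^*(1/z)`. -/
def paraConj {n : Type*} (R : Matrix n n (RatFunc ℂ)) : Matrix n n (RatFunc ℂ) :=
  fun i j => subst (RatFunc.X)⁻¹ (conjRF (R j i))

def IsParaHermitian {n : Type*} (R : Matrix n n (RatFunc ℂ)) : Prop := paraConj R = R

def IsParaSkewHermitian {n : Type*} (R : Matrix n n (RatFunc ℂ)) : Prop := paraConj R = -R

/-- The variable `z` of `ℂ(z)`. -/
def zz : RatFunc ℂ := RatFunc.X

/-!
Para-conjugation `f ↦ conj f (z⁻¹)` is an involutive automorphism of `ℂ(z)` that conjugates the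
constants and inverts `z`. For the resulting `*`-ring structure, para-Hermitian means Hermitian and
`z` is unitary. Hence `(z • P + Qᴴ)ᴴ = z⁻¹ • (z • Q + Pᴴ)`, and every palindromic transfer function
`T` satisfies `Tᴴ = z⁻¹ • T`: the factors `z⁻¹` from the two outer pencils and `z` from the inverse
of the middle one leave a single `z⁻¹`. If moreover `Tᴴ = T`, then `(z - 1) • T = 0`.
-/

section PalindromicTransfer

variable {K m n : Type*} [CommRing K] [StarRing K] {z : K}

theorem conjTranspose_smul_add_conjTranspose (hz : z ∈ unitary K) (P : Matrix m n K)
    (Q : Matrix n m K) : (z • P + Qᴴ)ᴴ = star z • (z • Q + Pᴴ) := by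
  rw [conjTranspose_add, conjTranspose_smul, conjTranspose_conjTranspose, smul_add, smul_smul,
    Unitary.star_mul_self_of_mem hz, one_smul, add_comm]

variable [Fintype n] [DecidableEq n]

theorem conjTranspose_inv_of_conjTranspose_eq_star_smul (hz : z ∈ unitary K) {M : Matrix n n K}
    (hdet : IsUnit M.det) (hM : Mᴴ = star z • M) : (M⁻¹)ᴴ = z • M⁻¹ := by
  rw [conjTranspose_nonsing_inv, hM]
  refine inv_eq_left_inv ?_
  rw [smul_mul_smul_comm, Unitary.mul_star_self_of_mem hz, nonsing_inv_mul M hdet, one_smul]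

/-- The transfer function at `z` of the `*`-palindromic linear system matrix with coefficients
`A`, `B`, `C`, `D`, over any commutative `*`-ring. It is meaningful only when
`(z • A + Aᴴ).det` is a unit: otherwise the inverse has the junk value `0`. -/
def palindromicTransfer (z : K) (A : Matrix n n K) (B C : Matrix n m K) (D : Matrix m m K) :
    Matrix m m K :=
  (z • D + Dᴴ) + (z • Bᴴ + Cᴴ) * (z • A + Aᴴ)⁻¹ * (z • C + B)

theorem conjTranspose_palindromicTransfer (hz : z ∈ unitary K) {A : Matrix n n K}
    (hdet : IsUnit (z • A + Aᴴ).det) (B C : Matrix n m K) (D : Matrix m m K) :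
    (palindromicTransfer z A B C D)ᴴ = star z • palindromicTransfer z A B C D := by
  have hinv : ((z • A + Aᴴ)⁻¹)ᴴ = z • (z • A + Aᴴ)⁻¹ :=
    conjTranspose_inv_of_conjTranspose_eq_star_smul hz hdet
      (conjTranspose_smul_add_conjTranspose hz A A)
  have hleft : (z • Bᴴ + Cᴴ)ᴴ = star z • (z • C + B) := by
    simpa using conjTranspose_smul_add_conjTranspose hz Bᴴ C
  have hright : (z • C + B)ᴴ = star z • (z • Bᴴ + Cᴴ) := by
    simpa using conjTranspose_smul_add_conjTranspose hz C Bᴴ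
  have hproduct : ((z • Bᴴ + Cᴴ) * (z • A + Aᴴ)⁻¹ * (z • C + B))ᴴ =
      star z • ((z • Bᴴ + Cᴴ) * (z • A + Aᴴ)⁻¹ * (z • C + B)) := by
    rw [conjTranspose_mul, conjTranspose_mul, hleft, hinv, hright]
    simp only [Matrix.smul_mul, Matrix.mul_smul, Matrix.mul_assoc]
    rw [smul_smul z, Unitary.mul_star_self_of_mem hz, one_smul]
  rw [palindromicTransfer, conjTranspose_add, conjTranspose_smul_add_conjTranspose hz D D,
    hproduct, ← smul_add]

theorem paraHermitian_no_palindromic_system_matrix_general (hz : z ∈ unitary K)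
    (hz_sub_one : IsRegular (z - 1)) {R : Matrix m m K} (hR : R ≠ 0) (hR_herm : R.IsHermitian) :
    ¬ ∃ (A : Matrix n n K) (B C : Matrix n m K) (D : Matrix m m K),
      IsUnit (z • A + Aᴴ).det ∧ R = palindromicTransfer z A B C D := by
  rintro ⟨A, B, C, D, hdet, h⟩
  have hsmul : z • R = R :=
    calc
      z • R = z • Rᴴ := by rw [hR_herm.eq]
      _ = z • star z • R := by rw [h, conjTranspose_palindromicTransfer hz hdet]
      _ = R := by rw [smul_smul, Unitary.mul_star_self_of_mem hz, one_smul]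
  refine hR (hz_sub_one.left.isSMulRegular.matrix.right_eq_zero_of_smul ?_)
  rw [sub_smul, one_smul, hsmul, sub_self]

end PalindromicTransfer

theorem mapRingHom_algebraMap_polynomial {R S : Type*} [CommRing R] [IsDomain R] [CommRing S]
    [IsDomain S] (φ : R[X] →+* S[X])
    (hφ : nonZeroDivisors R[X] ≤ (nonZeroDivisors S[X]).comap φ) (p : R[X]) :
    RatFunc.mapRingHom φ hφ (algebraMap R[X] (RatFunc R) p) =
      algebraMap S[X] (RatFunc S) (φ p) := by
  simpa [RatFunc.coe_mapRingHom_eq_coe_map] using RatFunc.map_apply_div φ hφ p 1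

theorem ratFunc_ringHom_ext {R S : Type*} [CommRing R] [IsDomain R] [Semiring S]
    {f g : RatFunc R →+* S}
    (hC : ∀ c, f (algebraMap R (RatFunc R) c) = g (algebraMap R (RatFunc R) c))
    (hX : f RatFunc.X = g RatFunc.X) : f = g := by
  refine IsLocalization.ringHom_ext (nonZeroDivisors R[X]) (Polynomial.ringHom_ext ?_ ?_)
  · simpa [RatFunc.algebraMap_eq_C] using hC
  · simpa using hX

theorem transcendental_inv_X {R : Type*} [CommRing R] [IsDomain R] :
    Transcendental R (RatFunc.X : RatFunc R)⁻¹ :=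
  mt IsAlgebraic.inv_iff.mp RatFunc.transcendental_X

/-- Evaluation of rational functions at a transcendental element `a`, as an algebra homomorphism.
At an algebraic `a`, `RatFunc.eval` is not even additive. -/
def evalAlgHomOfTranscendental {K L : Type*} [Field K] [Field L] [Algebra K L] {a : L}
    (ha : Transcendental K a) : RatFunc K →ₐ[K] L :=
  (IntermediateField.val _).comp (RatFunc.algEquivOfTranscendental a ha).toAlgHom

universe u

theorem evalAlgHomOfTranscendental_apply {K L : Type u} [Field K] [Field L] [Algebra K L] {a : L}
    (ha : Transcendental K a) (f : RatFunc K) :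
    evalAlgHomOfTranscendental ha f = RatFunc.eval (algebraMap K L) a f :=
  RatFunc.algEquivOfTranscendental_apply a ha f

theorem conjRF_algebraMap_polynomial (p : ℂ[X]) :
    conjRF (algebraMap ℂ[X] (RatFunc ℂ) p) =
      algebraMap ℂ[X] (RatFunc ℂ) (p.map (starRingEnd ℂ)) :=
  mapRingHom_algebraMap_polynomial _ _ p

theorem conjRF_zz : conjRF zz = zz := by
  rw [zz, ← RatFunc.algebraMap_X, conjRF_algebraMap_polynomial, Polynomial.map_X]

theorem conjRF_algebraMap (c : ℂ) :
    conjRF (algebraMap ℂ (RatFunc ℂ) c) = algebraMap ℂ (RatFunc ℂ) (star c) := by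
  rw [RatFunc.algebraMap_eq_C, ← RatFunc.algebraMap_C, conjRF_algebraMap_polynomial,
    Polynomial.map_C, RatFunc.algebraMap_C, starRingEnd_apply]

/-- Para-conjugation `f ↦ conj f (z⁻¹)` of scalar rational functions. -/
def paraConjHom : RatFunc ℂ →+* RatFunc ℂ :=
  (evalAlgHomOfTranscendental (K := ℂ) transcendental_inv_X).toRingHom.comp conjRF

theorem paraConjHom_apply (f : RatFunc ℂ) : paraConjHom f = subst RatFunc.X⁻¹ (conjRF f) :=
  evalAlgHomOfTranscendental_apply transcendental_inv_X (conjRF f)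

theorem paraConjHom_zz : paraConjHom zz = zz⁻¹ := by
  rw [paraConjHom_apply, conjRF_zz, subst, zz, RatFunc.eval_X]

theorem paraConjHom_algebraMap (c : ℂ) :
    paraConjHom (algebraMap ℂ (RatFunc ℂ) c) = algebraMap ℂ (RatFunc ℂ) (star c) := by
  rw [paraConjHom, RingHom.comp_apply, conjRF_algebraMap]
  exact AlgHom.commutes _ _

theorem paraConjHom_comp_paraConjHom : paraConjHom.comp paraConjHom = RingHom.id (RatFunc ℂ) := by
  refine ratFunc_ringHom_ext (fun c ↦ ?_) ?_
  · simp only [RingHom.comp_apply, paraConjHom_algebraMap, star_star, RingHom.id_apply]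
  · change paraConjHom (paraConjHom zz) = zz
    rw [paraConjHom_zz, map_inv₀, paraConjHom_zz, inv_inv]

/-- The `*`-ring structure on `ℂ(z)` given by para-conjugation; it makes the para-conjugate of a
matrix its conjugate transpose. -/
abbrev paraConjStarRing : StarRing (RatFunc ℂ) where
  star := paraConjHom
  star_involutive := RingHom.congr_fun paraConjHom_comp_paraConjHom
  star_mul f g := by rw [map_mul, mul_comm]
  star_add := map_add paraConjHom

attribute [local instance] paraConjStarRing

theorem zz_mem_unitary : zz ∈ unitary (RatFunc ℂ) := by
  have hstar : star zz * zz = 1 := by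
    change paraConjHom zz * zz = 1
    rw [paraConjHom_zz, inv_mul_cancel₀ RatFunc.X_ne_zero]
  exact Unitary.mem_iff.mpr ⟨hstar, mul_comm zz (star zz) ▸ hstar⟩

theorem zz_ne_one : zz ≠ 1 := fun h ↦
  RatFunc.transcendental_X (K := ℂ) ((show RatFunc.X = 1 from h) ▸ isAlgebraic_one)

theorem paraConj_eq_conjTranspose {n : Type*} (R : Matrix n n (RatFunc ℂ)) : paraConj R = Rᴴ :=
  Matrix.ext fun i j ↦ (paraConjHom_apply (R j i)).symm

theorem toRF_conjTranspose {n o : Type*} (A : Matrix n o ℂ) : toRF Aᴴ = (toRF A)ᴴ :=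
  Matrix.ext fun i j ↦ (paraConjHom_algebraMap (A j i)).symm

/-- a nonzero para-Hermitian rational matrix is not the transfer function of any
`*`-palindromic linear system matrix. -/
theorem paraHermitian_no_palindromic_system_matrix (m : ℕ)
    (R : Matrix (Fin m) (Fin m) (RatFunc ℂ)) (hR : R ≠ 0) (hpara : IsParaHermitian R) :
    ¬ ∃ (p : ℕ) (A : Matrix (Fin p) (Fin p) ℂ) (B C : Matrix (Fin p) (Fin m) ℂ)
        (D : Matrix (Fin m) (Fin m) ℂ),
      (zz • toRF A + toRF Aᴴ).det ≠ 0 ∧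
      R = (zz • toRF D + toRF Dᴴ) +
        (zz • toRF Bᴴ + toRF Cᴴ) * (zz • toRF A + toRF Aᴴ)⁻¹ * (zz • toRF C + toRF B) := by
  rintro ⟨p, A, B, C, D, hdet, h⟩
  simp only [toRF_conjTranspose] at hdet h
  exact paraHermitian_no_palindromic_system_matrix_general zz_mem_unitary
    (.of_ne_zero (sub_ne_zero.mpr zz_ne_one)) hR ((paraConj_eq_conjTranspose R).symm.trans hpara)
    ⟨_, _, _, _, hdet.isUnit, h⟩
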